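/- arXiv:1407.1109 — 2 statements merged into one kernel-verified Lean document; each statement's English description precedes it below -/
import Mathlib

section
/- For k ≥ 1, let q₁,…,q_k be independent, uniformly distributed random points in the closed Euclidean ball B(0,1/√π) ⊆ ℝ² of unit area, and let α_k denote the two-dimensional Lebesgue measure of the union ⋃_{i=1}^k B(q_i,1/√π), where B(q,s) is the closed ball of radius s centered at q. Then for all δ > 0 and G > 0, the series Σ_{k=1}^{∞} (−1)^{k−1}·(δ^k/k!)·E[e^{−δ·G·α_k}] converges absolutely and satisfies Σ_{k=1}^{∞} (−1)^{k−1}·(δ^k/k!)·E[e^{−δ·G·α_k}] ≥ (1 − e^{−δ})·e^{−δ·G}. -/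
open MeasureTheory Metric Real

/-- The uniform probability measure on the closed ball of unit area
B(0, 1/√π) ⊆ ℝ². -/
noncomputable def unifBall : Measure (EuclideanSpace ℝ (Fin 2)) :=
  (volume (closedBall (0 : EuclideanSpace ℝ (Fin 2)) (Real.sqrt π)⁻¹))⁻¹ •
    volume.restrict (closedBall (0 : EuclideanSpace ℝ (Fin 2)) (Real.sqrt π)⁻¹)

/-- α_k: the area (two-dimensional Lebesgue measure) of the union
⋃_{i=1}^k B(q_i, 1/√π). -/
noncomputable def unionArea {k : ℕ} (q : Fin k → EuclideanSpace ℝ (Fin 2)) : ℝ :=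
  (volume (⋃ i, closedBall (q i) (Real.sqrt π)⁻¹)).toReal

/-- E[e^{−δ·G·α_k}], where the k centers are i.i.d. uniform in B(0, 1/√π). -/
noncomputable def expMoment (δ G : ℝ) (k : ℕ) : ℝ :=
  ∫ q : Fin k → EuclideanSpace ℝ (Fin 2),
    Real.exp (-(δ * G) * unionArea q) ∂(Measure.pi fun _ => unifBall)

/-!
A Poisson process of intensity `L ν` has on average `L ν (⋃ K (q i))` points in `⋃ K (q i)`, so
`exp (-L ν (⋃ K (q i)))` is the probability that it misses every `K (q i)`. Given the process, the
`k` independent sets `K (q i)` are missed independently, each with the same conditional probability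
`U ∈ [0, 1]`; hence `E exp (-L ν (⋃ K (q i))) = E U ^ k`. The alternating series is therefore
`E (1 - exp (-δ U))`, and concavity of `u ↦ 1 - exp (-δ u)` on `[0, 1]` bounds it below by
`(1 - exp (-δ)) E U`, where `E U` is the case `k = 1`. For the disks, `ν` is the uniform probability
measure on a window of area 4 and `L = 4 δ G`.
-/

open ProbabilityTheory

open scoped NNReal

section MomentSeries

lemma hasSum_pow_div_factorial_exp (x : ℝ) :
    HasSum (fun n : ℕ => x ^ n / (Nat.factorial n : ℝ)) (exp x) := by
  rw [exp_eq_exp_ℝ]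
  exact NormedSpace.expSeries_div_hasSum_exp x

lemma hasSum_alternating_one_sub_exp (δ u : ℝ) :
    HasSum (fun k : ℕ => (-1 : ℝ) ^ k * (δ ^ (k + 1) / (Nat.factorial (k + 1) : ℝ)) * u ^ (k + 1))
      (1 - exp (-(δ * u))) := by
  have htail := ((hasSum_nat_add_iff' 1).2 (hasSum_pow_div_factorial_exp (-(δ * u)))).neg
  simp only [Finset.sum_range_one, pow_zero, Nat.factorial_zero, Nat.cast_one, div_one,
    neg_sub] at htail
  refine htail.congr_fun fun k => ?_
  rw [neg_pow (δ * u), mul_pow, pow_succ (-1 : ℝ) k]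
  ring

lemma one_sub_exp_neg_mul_le (δ : ℝ) {u : ℝ} (hu : u ∈ Set.Icc (0 : ℝ) 1) :
    (1 - exp (-δ)) * u ≤ 1 - exp (-(δ * u)) := by
  have hconv : exp (u * -δ) ≤ u * exp (-δ) + (1 - u) := by
    simpa using convexOn_exp.2 (Set.mem_univ (-δ)) (Set.mem_univ 0) hu.1 (sub_nonneg.2 hu.2)
      (add_sub_cancel u 1)
  rw [show -(δ * u) = u * -δ by ring]
  linarith

variable {Ω : Type*} [MeasurableSpace Ω] {P : Measure Ω} [IsFiniteMeasure P] {U : Ω → ℝ}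

lemma hasSum_alternating_integral_pow (hU : AEStronglyMeasurable U P) {B : ℝ}
    (hB : ∀ᵐ ω ∂P, |U ω| ≤ B) (δ : ℝ) :
    HasSum (fun k : ℕ => (-1 : ℝ) ^ k * (δ ^ (k + 1) / (Nat.factorial (k + 1) : ℝ)) *
        ∫ ω, U ω ^ (k + 1) ∂P)
      (∫ ω, (1 - exp (-(δ * U ω))) ∂P) := by
  simp_rw [← integral_const_mul]
  refine hasSum_integral_of_dominated_convergence
    (fun k _ => (|δ| * B) ^ (k + 1) / (Nat.factorial (k + 1) : ℝ))
    (fun k => (hU.pow (k + 1)).const_mul _) (fun k => ?_)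
    (.of_forall fun _ => (summable_nat_add_iff 1).2 (summable_pow_div_factorial (|δ| * B)))
    (integrable_const _) (.of_forall fun ω => hasSum_alternating_one_sub_exp δ (U ω))
  filter_upwards [hB] with ω hω
  calc ‖(-1 : ℝ) ^ k * (δ ^ (k + 1) / (Nat.factorial (k + 1) : ℝ)) * U ω ^ (k + 1)‖
      = (|δ| * |U ω|) ^ (k + 1) / (Nat.factorial (k + 1) : ℝ) := by
        simp only [norm_mul, norm_div, norm_pow, norm_neg, norm_one, one_pow, one_mul, norm_eq_abs,
          Nat.abs_cast]
        ring
    _ ≤ (|δ| * B) ^ (k + 1) / (Nat.factorial (k + 1) : ℝ) := by gcongr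

lemma one_sub_exp_neg_mul_integral_le (hU : AEStronglyMeasurable U P)
    (h01 : ∀ᵐ ω ∂P, U ω ∈ Set.Icc (0 : ℝ) 1) (δ : ℝ) :
    (1 - exp (-δ)) * ∫ ω, U ω ∂P ≤ ∫ ω, (1 - exp (-(δ * U ω))) ∂P := by
  rw [← integral_const_mul]
  have hUint : Integrable U P := .of_mem_Icc 0 1 hU.aemeasurable h01
  have hexp : Integrable (fun ω => exp (-(δ * U ω))) P := by
    refine .of_bound (by fun_prop) (exp |δ|) ?_
    filter_upwards [h01] with ω hω
    rw [norm_of_nonneg (exp_pos _).le, exp_le_exp]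
    calc -(δ * U ω) ≤ |δ| * |U ω| := by rw [← abs_mul]; exact neg_le_abs _
      _ ≤ |δ| := mul_le_of_le_one_right (abs_nonneg δ) (by rw [abs_of_nonneg hω.1]; exact hω.2)
  refine integral_mono_ae (hUint.const_mul _) ((integrable_const 1).sub hexp) ?_
  filter_upwards [h01] with ω hω using one_sub_exp_neg_mul_le δ hω

end MomentSeries

section ProductMeasures

variable {α β : Type*} [MeasurableSpace α] [MeasurableSpace β]

lemma integral_measureReal_prodMk_left (μ : Measure α) (ν : Measure β) [SFinite μ]
    [IsFiniteMeasure ν] {r : α → β → Prop} (hr : MeasurableSet {p : α × β | r p.1 p.2}) :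
    ∫ a, ν.real {b | r a b} ∂μ = (μ.prod ν).real {p | r p.1 p.2} := by
  rw [measureReal_def, Measure.prod_apply hr]
  exact integral_toReal (measurable_measure_prodMk_left hr).aemeasurable
    (.of_forall fun _ => measure_lt_top ν _)

lemma integral_measureReal_prodMk_comm (μ : Measure α) (ν : Measure β) [IsFiniteMeasure μ]
    [IsFiniteMeasure ν] {r : α → β → Prop} (hr : MeasurableSet {p : α × β | r p.1 p.2}) :
    ∫ a, ν.real {b | r a b} ∂μ = ∫ b, μ.real {a | r a b} ∂ν := by
  rw [integral_measureReal_prodMk_left μ ν hr, ← Measure.prod_swap,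
    map_measureReal_apply measurable_swap hr]
  exact (integral_measureReal_prodMk_left ν μ (r := fun b a => r a b) (measurable_swap hr)).symm

lemma integral_measureReal_pow_card (μ : Measure α) (ν : Measure β) [IsFiniteMeasure μ]
    [IsFiniteMeasure ν] {r : α → β → Prop} (hr : MeasurableSet {p : α × β | r p.1 p.2})
    (ι : Type*) [Fintype ι] :
    ∫ b, μ.real {a | r a b} ^ Fintype.card ι ∂ν =
      ∫ a : ι → α, ν.real {b | ∀ i, r (a i) b} ∂Measure.pi fun _ => μ := by
  have hforall : MeasurableSet {p : (ι → α) × β | ∀ i, r (p.1 i) p.2} := by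
    rw [Set.ofPred_forall]
    exact .iInter fun i => hr.preimage (f := fun p : (ι → α) × β => (p.1 i, p.2)) (by fun_prop)
  rw [integral_measureReal_prodMk_comm _ ν (r := fun (a : ι → α) b => ∀ i, r (a i) b) hforall]
  refine integral_congr_ae (.of_forall fun b => ?_)
  have hpi : {a : ι → α | ∀ i, r (a i) b} = Set.univ.pi fun _ => {a | r a b} := by
    ext a
    simp only [Set.mem_ofPred_eq, Set.mem_univ_pi]
  simp only [hpi, measureReal_def, Measure.pi_pi, Finset.prod_const, Finset.card_univ,
    ENNReal.toReal_pow]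

end ProductMeasures

section PoissonSample

variable {E : Type*} [MeasurableSpace E]

/-- A Poisson process with intensity measure `L • ν`, encoded as a Poisson number `N` of points
together with an infinite i.i.d. sequence, of which only the first `N` terms belong to the
process. -/
noncomputable def poissonSample (L : ℝ≥0) (ν : Measure E) : Measure (ℕ × (ℕ → E)) :=
  (poissonMeasure L).prod (Measure.infinitePi fun _ => ν)

variable {Q : Type*} [MeasurableSpace Q]

/-- The conditional probability `U`, given a Poisson process `ω` encoded as in `poissonSample`, that
the random set `K q` with `q` distributed as `μ` contains no point of the process. -/
noncomputable def missProb (μ : Measure Q) (K : Q → Set E) (ω : ℕ × (ℕ → E)) : ℝ :=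
  μ.real {q | ∀ i < ω.1, ω.2 i ∉ K q}

lemma integral_poissonMeasure_pow (L : ℝ≥0) (t : ℝ) :
    ∫ n, t ^ n ∂poissonMeasure L = exp (L * (t - 1)) := by
  have hseries : HasSum (fun n : ℕ => (exp (-L) * L ^ n / (Nat.factorial n : ℝ)) • t ^ n)
      (exp (-L) * exp (L * t)) := by
    refine ((hasSum_pow_div_factorial_exp (L * t)).mul_left _).congr_fun fun n => ?_
    rw [smul_eq_mul]
    ring
  rw [integral_poissonMeasure, hseries.tsum_eq, ← exp_add]
  ring_nf

lemma infinitePi_real_forall_lt_mem (ν : Measure E) [IsProbabilityMeasure ν] {A : Set E}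
    (hA : MeasurableSet A) (n : ℕ) :
    (Measure.infinitePi fun _ : ℕ => ν).real {x | ∀ i < n, x i ∈ A} = ν.real A ^ n := by
  have hpi : {x : ℕ → E | ∀ i < n, x i ∈ A} = (Finset.range n : Set ℕ).pi fun _ => A := by
    ext x
    simp only [Set.mem_ofPred_eq, Set.mem_pi, Finset.coe_range, Set.mem_Iio]
  rw [hpi, measureReal_def, Measure.infinitePi_pi _ fun _ _ => hA, Finset.prod_const,
    Finset.card_range, ENNReal.toReal_pow, measureReal_def]

variable (L : ℝ≥0) (ν : Measure E) [IsProbabilityMeasure ν]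

instance : IsProbabilityMeasure (poissonSample L ν) := by
  unfold poissonSample
  infer_instance

lemma poissonSample_real_forall_mem {A : Set E} (hA : MeasurableSet A) :
    (poissonSample L ν).real {ω | ∀ i < ω.1, ω.2 i ∈ A} = exp (-(L * ν.real Aᶜ)) := by
  have hS : MeasurableSet {ω : ℕ × (ℕ → E) | ∀ i < ω.1, ω.2 i ∈ A} := by
    measurability
  rw [poissonSample, ← integral_measureReal_prodMk_left _ _
    (r := fun n (x : ℕ → E) => ∀ i < n, x i ∈ A) hS]
  simp only [infinitePi_real_forall_lt_mem ν hA, integral_poissonMeasure_pow]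
  rw [probReal_compl_eq_one_sub hA, ← mul_neg, neg_sub]

variable {K : Q → Set E} (hK : MeasurableSet {p : Q × E | p.2 ∈ K p.1})
include hK

lemma measurableSet_forall_notMem :
    MeasurableSet {p : Q × (ℕ × (ℕ → E)) | ∀ i < p.2.1, p.2.2 i ∉ K p.1} := by
  refine measurableSet_setOfPred.2 (.forall fun i => .imp ?_ (.not ?_))
  · exact measurableSet_setOfPred.1 (measurableSet_lt measurable_const (by fun_prop))
  · exact measurableSet_setOfPred.1 (hK.preimage (f := fun p : Q × (ℕ × (ℕ → E)) => (p.1, p.2.2 i))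
      (by fun_prop))

lemma measurable_missProb (μ : Measure Q) [SFinite μ] : Measurable (missProb μ K) :=
  (measurable_measure_prodMk_right (measurableSet_forall_notMem hK)).ennreal_toReal

variable (μ : Measure Q) [IsFiniteMeasure μ]

lemma integral_exp_neg_measureReal_iUnion (ι : Type*) [Fintype ι] :
    ∫ q : ι → Q, exp (-(L * ν.real (⋃ i, K (q i)))) ∂Measure.pi (fun _ => μ) =
      ∫ ω, missProb μ K ω ^ Fintype.card ι ∂poissonSample L ν := by
  simp only [missProb]
  rw [integral_measureReal_pow_card μ (poissonSample L ν)
    (r := fun q (ω : ℕ × (ℕ → E)) => ∀ i < ω.1, ω.2 i ∉ K q) (measurableSet_forall_notMem hK) ι]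
  refine integral_congr_ae (.of_forall fun q => ?_)
  have hunion : MeasurableSet (⋃ i, K (q i)) :=
    .iUnion fun i => hK.preimage measurable_prodMk_left
  have hvoid := poissonSample_real_forall_mem L ν hunion.compl
  rw [compl_compl] at hvoid
  simp only [← hvoid]
  congr 1
  ext ω
  simp only [Set.mem_ofPred_eq, Set.mem_compl_iff, Set.mem_iUnion, not_exists]
  exact ⟨fun h j i hi => h i hi j, fun h i hi j => h j i hi⟩

lemma integral_exp_neg_measureReal :
    ∫ q, exp (-(L * ν.real (K q))) ∂μ = ∫ ω, missProb μ K ω ∂poissonSample L ν := by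
  rw [← (measurePreserving_funUnique μ Unit).integral_comp']
  simpa [← Set.iSup_eq_iUnion, iSup_unique] using integral_exp_neg_measureReal_iUnion L ν hK μ Unit

end PoissonSample

theorem series_converges_and_lower_bound_general {Q E : Type*} [MeasurableSpace Q]
    [MeasurableSpace E] (μ : Measure Q) [IsProbabilityMeasure μ] (ν : Measure E)
    [IsProbabilityMeasure ν] {K : Q → Set E} (hK : MeasurableSet {p : Q × E | p.2 ∈ K p.1})
    {L : ℝ} (hL : 0 ≤ L) (δ : ℝ) :
    Summable (fun k : ℕ => |(-1 : ℝ) ^ k * (δ ^ (k + 1) / (Nat.factorial (k + 1) : ℝ)) *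
      ∫ q : Fin (k + 1) → Q, exp (-(L * ν.real (⋃ i, K (q i)))) ∂Measure.pi fun _ => μ|) ∧
    (1 - exp (-δ)) * ∫ q, exp (-(L * ν.real (K q))) ∂μ ≤
      ∑' k : ℕ, (-1 : ℝ) ^ k * (δ ^ (k + 1) / (Nat.factorial (k + 1) : ℝ)) *
        ∫ q : Fin (k + 1) → Q, exp (-(L * ν.real (⋃ i, K (q i)))) ∂Measure.pi fun _ => μ := by
  lift L to ℝ≥0 using hL
  have hmeas : AEStronglyMeasurable (missProb μ K) (poissonSample L ν) :=
    (measurable_missProb hK μ).aestronglyMeasurable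
  have h01 : ∀ᵐ ω ∂poissonSample L ν, missProb μ K ω ∈ Set.Icc (0 : ℝ) 1 :=
    .of_forall fun _ => ⟨measureReal_nonneg, measureReal_le_one⟩
  have hsum := hasSum_alternating_integral_pow hmeas
    (h01.mono fun _ h => (abs_of_nonneg h.1).trans_le h.2) δ
  simp only [integral_exp_neg_measureReal_iUnion L ν hK μ, Fintype.card_fin,
    integral_exp_neg_measureReal L ν hK μ]
  exact ⟨hsum.summable.abs,
    (one_sub_exp_neg_mul_integral_le hmeas h01 δ).trans_eq hsum.tsum_eq.symm⟩

section UnitAreaDisks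

lemma volume_closedBall_mul_inv_sqrt_pi (x : EuclideanSpace ℝ (Fin 2)) {R : ℝ} (hR : 0 ≤ R) :
    volume (closedBall x (R * (√π)⁻¹)) = ENNReal.ofReal (R ^ 2) := by
  rw [EuclideanSpace.volume_closedBall_fin_two, ← ENNReal.ofReal_pow (by positivity),
    ← ENNReal.ofReal_mul (by positivity), mul_pow, inv_pow, sq_sqrt pi_pos.le,
    inv_mul_cancel_right₀ pi_ne_zero]

lemma volume_closedBall_inv_sqrt_pi (x : EuclideanSpace ℝ (Fin 2)) :
    volume (closedBall x (√π)⁻¹) = 1 := by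
  simpa using volume_closedBall_mul_inv_sqrt_pi x zero_le_one

instance : IsProbabilityMeasure unifBall :=
  cond_isProbabilityMeasure_of_finite (by rw [volume_closedBall_inv_sqrt_pi]; exact one_ne_zero)
    (by rw [volume_closedBall_inv_sqrt_pi]; exact ENNReal.one_ne_top)

lemma ae_unifBall_mem : ∀ᵐ q ∂unifBall, q ∈ closedBall 0 (√π)⁻¹ :=
  ae_cond_mem measurableSet_closedBall

/-- The uniform probability measure on the disk of area 4 about the origin, which contains every
unit-area disk centered in the unit-area disk. -/
noncomputable def windowMeasure : Measure (EuclideanSpace ℝ (Fin 2)) :=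
  volume[|closedBall 0 (2 * (√π)⁻¹)]

lemma volume_window :
    volume (closedBall (0 : EuclideanSpace ℝ (Fin 2)) (2 * (√π)⁻¹)) = 4 := by
  rw [volume_closedBall_mul_inv_sqrt_pi 0 zero_le_two]
  norm_num

instance : IsProbabilityMeasure windowMeasure :=
  cond_isProbabilityMeasure_of_finite (by rw [volume_window]; exact four_ne_zero)
    (by rw [volume_window]; exact ENNReal.ofNat_ne_top)

lemma four_mul_windowMeasure_real {T : Set (EuclideanSpace ℝ (Fin 2))}
    (hT : T ⊆ closedBall 0 (2 * (√π)⁻¹)) : 4 * windowMeasure.real T = volume.real T := by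
  rw [windowMeasure, measureReal_def, cond_apply measurableSet_closedBall, volume_window,
    Set.inter_eq_right.2 hT]
  simp [measureReal_def]

lemma closedBall_subset_window {q : EuclideanSpace ℝ (Fin 2)} (hq : q ∈ closedBall 0 (√π)⁻¹) :
    closedBall q (√π)⁻¹ ⊆ closedBall 0 (2 * (√π)⁻¹) :=
  closedBall_subset_closedBall' (by linarith [mem_closedBall.1 hq])

lemma expMoment_eq (δ G : ℝ) (k : ℕ) :
    expMoment δ G k = ∫ q : Fin k → EuclideanSpace ℝ (Fin 2),
      exp (-(4 * (δ * G) * windowMeasure.real (⋃ i, closedBall (q i) (√π)⁻¹)))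
        ∂Measure.pi fun _ => unifBall := by
  refine integral_congr_ae ?_
  have hcenters : ∀ᵐ q : Fin k → EuclideanSpace ℝ (Fin 2) ∂Measure.pi fun _ => unifBall,
      ∀ i, q i ∈ closedBall 0 (√π)⁻¹ :=
    ae_all_iff.2 fun i => Measure.tendsto_eval_ae_ae.eventually ae_unifBall_mem
  filter_upwards [hcenters] with q hq
  rw [unionArea, ← measureReal_def, ← four_mul_windowMeasure_real
    (Set.iUnion_subset fun i => closedBall_subset_window (hq i))]
  ring_nf

lemma integral_exp_neg_windowMeasure_real_closedBall (c : ℝ) :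
    ∫ q, exp (-(4 * c * windowMeasure.real (closedBall q (√π)⁻¹))) ∂unifBall = exp (-c) := by
  have hconst : ∀ᵐ q ∂unifBall,
      exp (-(4 * c * windowMeasure.real (closedBall q (√π)⁻¹))) = exp (-c) := by
    filter_upwards [ae_unifBall_mem] with q hq
    have harea := four_mul_windowMeasure_real (closedBall_subset_window hq)
    rw [measureReal_def volume, volume_closedBall_inv_sqrt_pi, ENNReal.toReal_one] at harea
    rw [mul_right_comm, harea, one_mul]
  rw [integral_congr_ae hconst, integral_const, probReal_univ, one_smul]

lemma measurableSet_mem_closedBall {X : Type*} [PseudoMetricSpace X] [SecondCountableTopology X]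
    [MeasurableSpace X] [OpensMeasurableSpace X] (r : ℝ) :
    MeasurableSet {p : X × X | p.2 ∈ closedBall p.1 r} :=
  measurableSet_le (measurable_snd.dist measurable_fst) measurable_const

end UnitAreaDisks

/-- For all δ > 0 and G > 0, the series Σ_{k≥1} (−1)^{k−1}·(δ^k/k!)·E[e^{−δGα_k}]
converges absolutely and is ≥ (1 − e^{−δ})·e^{−δG}. -/
theorem series_converges_and_lower_bound (δ G : ℝ) (hδ : 0 < δ) (hG : 0 < G) :
    Summable (fun k : ℕ =>
      |(-1 : ℝ) ^ k * (δ ^ (k + 1) / (Nat.factorial (k + 1) : ℝ)) * expMoment δ G (k + 1)|) ∧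
    (1 - Real.exp (-δ)) * Real.exp (-(δ * G)) ≤
      ∑' k : ℕ, (-1 : ℝ) ^ k * (δ ^ (k + 1) / (Nat.factorial (k + 1) : ℝ)) *
        expMoment δ G (k + 1) := by
  rw [← integral_exp_neg_windowMeasure_real_closedBall (δ * G)]
  simp only [expMoment_eq]
  exact series_converges_and_lower_bound_general unifBall windowMeasure
    (K := fun q => closedBall q (√π)⁻¹) (measurableSet_mem_closedBall _) (by positivity) δ
end

section
/- Let δ > 0 and G > 0, let Λ = (Λ₁,…,Λ_S) be a probability vector (Λ_s ≥ 0, Σ_{s=1}^S Λ_s = 1) with λ := Σ_{s=1}^{S} s·Λ_s > 0, and define γ(x) := Σ_{s=1}^{S} (s·Λ_s/λ)·x^{s−1}·e^{−δ·(1−x^s)} for x ∈ [0,1], with Λ₂ := 0 if S < 2. If γ(1 − e^{−G·δ·λ·q}) < q for every q ∈ (0,1], then G·δ·e^{−δ}·(δ·Λ₁ + 2·Λ₂) ≤ 1; consequently, if δ·Λ₁ + 2·Λ₂ > 0, then G ≤ (e^{δ}/δ)·(1/(2Λ₂))·(1/(1 + δΛ₁/(2Λ₂))) ≤ e^{δ}/(δ·2Λ₂)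 whenever Λ₂ > 0. -/
/-!
The recursion map `f q = γ (1 - exp (-(G δ λ q)))` satisfies `0 ≤ f 0`, so if its graph lies on or
below the diagonal at arbitrarily small `q > 0`, then `f' 0 ≤ 1`. Only the degrees `1` and `2`
contribute to `γ' 0 = exp (-δ) (δ Λ₁ + 2 Λ₂) / λ`, and the factor `λ` cancels in the chain rule,
whence `f' 0 = G δ exp (-δ) (δ Λ₁ + 2 Λ₂)`.
-/

open Filter Set Topology

theorem hasDerivWithinAt_Ioi_le_of_frequently_le {f g : ℝ → ℝ} {f' g' a : ℝ}
    (hf : HasDerivWithinAt f f' (Ioi a) a) (hg : HasDerivWithinAt g g' (Ioi a) a)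
    (ha : g a ≤ f a) (hfg : ∃ᶠ x in 𝓝[>] a, f x ≤ g x) : f' ≤ g' := by
  rw [hasDerivWithinAt_iff_tendsto_slope' self_notMem_Ioi] at hf hg
  refine le_of_tendsto_of_tendsto_of_frequently hf hg ?_
  refine (hfg.and_eventually self_mem_nhdsWithin).mono fun x ⟨hx, hax⟩ => ?_
  rw [slope_def_field, slope_def_field]
  exact div_le_div_of_nonneg_right (sub_le_sub hx ha) (sub_nonneg.2 (mem_Ioi.1 hax).le)

/-- The average temporal degree `λ = ∑ s, s Λ_s`, for degrees `1 ≤ s ≤ S`. -/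
noncomputable def meanTemporalDegree (S : ℕ) (Λ : ℕ → ℝ) : ℝ :=
  ∑ s ∈ Finset.Icc 1 S, (s : ℝ) * Λ s

/-- The asymptotic edge-oriented users' degree distribution `γ` of the decoding graph, for average
spatial degree `δ` and temporal degree distribution `Λ` on `1, …, S`. -/
noncomputable def edgeDegreeDistribution (δ : ℝ) (S : ℕ) (Λ : ℕ → ℝ) (x : ℝ) : ℝ :=
  ∑ s ∈ Finset.Icc 1 S, ((s : ℝ) * Λ s / meanTemporalDegree S Λ) * x ^ (s - 1) *
    Real.exp (-(δ * (1 - x ^ s)))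

/-- The and-or-tree recursion map `f(G, Λ; q) = γ (1 - exp (-(G δ λ q)))` at load `G`. -/
noncomputable def andOrTreeMap (δ G : ℝ) (S : ℕ) (Λ : ℕ → ℝ) (q : ℝ) : ℝ :=
  edgeDegreeDistribution δ S Λ (1 - Real.exp (-(G * δ * meanTemporalDegree S Λ * q)))

theorem edgeDegreeDistribution_zero (δ : ℝ) (S : ℕ) (Λ : ℕ → ℝ) :
    edgeDegreeDistribution δ S Λ 0 =
      (if 1 ≤ S then Λ 1 else 0) / meanTemporalDegree S Λ * Real.exp (-δ) := by
  have hvanish : ∀ s ∈ Finset.Icc 1 S, s ≠ 1 → ((s : ℝ) * Λ s / meanTemporalDegree S Λ) *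
      0 ^ (s - 1) * Real.exp (-(δ * (1 - 0 ^ s))) = 0 := by
    intro s hs hs1
    have : s - 1 ≠ 0 := by grind
    simp [this]
  rw [edgeDegreeDistribution, Finset.sum_eq_ite 1 hvanish]
  simp [ite_div, ite_mul]

theorem hasDerivAt_mul_pow_mul_exp_zero (δ : ℝ) (s : ℕ) :
    HasDerivAt (fun x : ℝ => (s : ℝ) * x ^ (s - 1) * Real.exp (-(δ * (1 - x ^ s))))
      (Real.exp (-δ) * ((if s = 1 then δ else 0) + if s = 2 then 2 else 0)) 0 := by
  have hpow := (hasDerivAt_pow (s - 1) (0 : ℝ)).const_mul (s : ℝ)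
  have hexp := ((((hasDerivAt_pow s (0 : ℝ)).const_sub 1).const_mul δ).neg).exp
  refine (hpow.mul hexp).congr_deriv ?_
  rcases s with _ | _ | _ | s <;> simp [mul_comm]

theorem hasDerivAt_edgeDegreeDistribution_zero (δ : ℝ) (S : ℕ) (Λ : ℕ → ℝ) :
    HasDerivAt (edgeDegreeDistribution δ S Λ)
      (Real.exp (-δ) * (δ * (if 1 ≤ S then Λ 1 else 0) + 2 * if 2 ≤ S then Λ 2 else 0) /
        meanTemporalDegree S Λ) 0 := by
  have hsum := HasDerivAt.fun_sum fun s (_ : s ∈ Finset.Icc 1 S) =>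
    (hasDerivAt_mul_pow_mul_exp_zero δ s).const_mul (Λ s / meanTemporalDegree S Λ)
  have hγ : edgeDegreeDistribution δ S Λ = fun x => ∑ s ∈ Finset.Icc 1 S,
      Λ s / meanTemporalDegree S Λ * ((s : ℝ) * x ^ (s - 1) * Real.exp (-(δ * (1 - x ^ s)))) :=
    funext fun x => Finset.sum_congr rfl fun s _ => by ring
  rw [hγ]
  refine hsum.congr_deriv ?_
  simp only [mul_add, mul_ite, mul_zero, Finset.sum_add_distrib, Finset.sum_ite_eq',
    Finset.mem_Icc, le_refl, Nat.one_le_ofNat, true_and, add_div, ite_div, zero_div]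
  congr 2 <;> ring

theorem hasDerivAt_andOrTreeMap_zero (δ G : ℝ) {S : ℕ} {Λ : ℕ → ℝ}
    (hmean : meanTemporalDegree S Λ ≠ 0) :
    HasDerivAt (andOrTreeMap δ G S Λ)
      (G * δ * Real.exp (-δ) *
        (δ * (if 1 ≤ S then Λ 1 else 0) + 2 * if 2 ≤ S then Λ 2 else 0)) 0 := by
  set c := G * δ * meanTemporalDegree S Λ with hc
  have hinner : HasDerivAt (fun q : ℝ => 1 - Real.exp (-(c * q))) c 0 := by
    simpa using ((((hasDerivAt_id (0 : ℝ)).const_mul c).neg).exp).const_sub 1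
  have hcomp := HasDerivAt.comp_of_eq 0 (hasDerivAt_edgeDegreeDistribution_zero δ S Λ) hinner
    (by simp)
  refine hcomp.congr_deriv ?_
  rw [hc]
  field_simp

theorem stability_coefficient_le_one {δ G : ℝ} {S : ℕ} {Λ : ℕ → ℝ}
    (hΛ₁ : 0 ≤ if 1 ≤ S then Λ 1 else 0) (hmean : 0 < meanTemporalDegree S Λ)
    (hstab : ∃ᶠ q in 𝓝[>] 0, andOrTreeMap δ G S Λ q ≤ q) :
    G * δ * Real.exp (-δ) *
      (δ * (if 1 ≤ S then Λ 1 else 0) + 2 * if 2 ≤ S then Λ 2 else 0) ≤ 1 := by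
  have hzero : 0 ≤ andOrTreeMap δ G S Λ 0 := by
    simp only [andOrTreeMap, mul_zero, neg_zero, Real.exp_zero, sub_self,
      edgeDegreeDistribution_zero]
    positivity
  exact hasDerivWithinAt_Ioi_le_of_frequently_le
    (hasDerivAt_andOrTreeMap_zero δ G hmean.ne').hasDerivWithinAt
    (hasDerivAt_id 0).hasDerivWithinAt hzero hstab

theorem exp_div_mul_one_div_mul_one_div (δ a : ℝ) {b : ℝ} (hb : b ≠ 0) :
    Real.exp δ / δ * (1 / b) * (1 / (1 + δ * a / b)) = Real.exp δ / (δ * (δ * a + b)) := by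
  rw [one_add_div hb, add_comm b]
  field_simp

theorem le_exp_div_of_mul_exp_neg_le_one {δ G c : ℝ} (hδc : 0 < δ * c)
    (h : G * δ * Real.exp (-δ) * c ≤ 1) : G ≤ Real.exp δ / (δ * c) := by
  rw [le_div_iff₀ hδc, ← div_le_one (Real.exp_pos δ)]
  calc G * (δ * c) / Real.exp δ = G * δ * Real.exp (-δ) * c := by rw [Real.exp_neg]; ring
    _ ≤ 1 := h

theorem stability_condition_upper_bound_general {δ G : ℝ} (hδ : 0 < δ) {S : ℕ} {Λ : ℕ → ℝ}
    {Λ₁ Λ₂ : ℝ} (hΛ₁ : Λ₁ = if 1 ≤ S then Λ 1 else 0) (hΛ₂ : Λ₂ = if 2 ≤ S then Λ 2 else 0)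
    (hΛ₁_nonneg : 0 ≤ Λ₁) (hmean : 0 < meanTemporalDegree S Λ)
    (hstab : ∃ᶠ q in 𝓝[>] 0, andOrTreeMap δ G S Λ q ≤ q) :
    G * δ * Real.exp (-δ) * (δ * Λ₁ + 2 * Λ₂) ≤ 1 ∧
    (0 < Λ₂ →
      G ≤ (Real.exp δ / δ) * (1 / (2 * Λ₂)) * (1 / (1 + δ * Λ₁ / (2 * Λ₂))) ∧
      (Real.exp δ / δ) * (1 / (2 * Λ₂)) * (1 / (1 + δ * Λ₁ / (2 * Λ₂))) ≤
        Real.exp δ / (δ * (2 * Λ₂))) := by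
  have hcoeff : G * δ * Real.exp (-δ) * (δ * Λ₁ + 2 * Λ₂) ≤ 1 := by
    subst hΛ₁ hΛ₂
    exact stability_coefficient_le_one hΛ₁_nonneg hmean hstab
  refine ⟨hcoeff, fun hΛ₂_pos => ?_⟩
  rw [exp_div_mul_one_div_mul_one_div δ Λ₁ (by positivity)]
  refine ⟨le_exp_div_of_mul_exp_neg_le_one (by positivity) hcoeff, ?_⟩
  gcongr
  exact le_add_of_nonneg_left (by positivity)

/-- Stability-condition upper bound on the and-or-tree threshold estimate:
with γ(x) = Σ_{s=1}^S (s·Λ_s/λ)·x^{s−1}·e^{−δ(1−x^s)} and Λ₂ := 0 if S < 2,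
if γ(1 − e^{−Gδλq}) < q for every q ∈ (0,1], then
G·δ·e^{−δ}·(δΛ₁ + 2Λ₂) ≤ 1; consequently, whenever Λ₂ > 0,
G ≤ (e^δ/δ)·(1/(2Λ₂))·(1/(1 + δΛ₁/(2Λ₂))) ≤ e^δ/(δ·2Λ₂). -/
theorem stability_condition_upper_bound (δ G : ℝ) (hδ : 0 < δ) (hG : 0 < G)
    (S : ℕ) (Λ : ℕ → ℝ)
    (hΛ0 : ∀ s ∈ Finset.Icc 1 S, 0 ≤ Λ s)
    (hΛ1 : ∑ s ∈ Finset.Icc 1 S, Λ s = 1)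
    (lam : ℝ) (hlam : lam = ∑ s ∈ Finset.Icc 1 S, (s : ℝ) * Λ s) (hlam_pos : 0 < lam)
    (Λ₁ Λ₂ : ℝ) (hΛ₁ : Λ₁ = if 1 ≤ S then Λ 1 else 0) (hΛ₂ : Λ₂ = if 2 ≤ S then Λ 2 else 0)
    (γ : ℝ → ℝ)
    (hγ : γ = fun x : ℝ => ∑ s ∈ Finset.Icc 1 S,
      ((s : ℝ) * Λ s / lam) * x ^ (s - 1) * Real.exp (-(δ * (1 - x ^ s))))
    (hstab : ∀ q ∈ Set.Ioc (0 : ℝ) 1, γ (1 - Real.exp (-(G * δ * lam * q))) < q) :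
    G * δ * Real.exp (-δ) * (δ * Λ₁ + 2 * Λ₂) ≤ 1 ∧
    (0 < Λ₂ →
      G ≤ (Real.exp δ / δ) * (1 / (2 * Λ₂)) * (1 / (1 + δ * Λ₁ / (2 * Λ₂))) ∧
      (Real.exp δ / δ) * (1 / (2 * Λ₂)) * (1 / (1 + δ * Λ₁ / (2 * Λ₂))) ≤
        Real.exp δ / (δ * (2 * Λ₂))) := by
  subst hlam hγ
  exact stability_condition_upper_bound_general hδ hΛ₁ hΛ₂ (by grind) hlam_pos
    (eventually_of_mem (Ioc_mem_nhdsGT one_pos) fun q hq => (hstab q hq).le).frequently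
end
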